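/- Let π: F_2[a,b,c,d,e,f] → F_2[x,y,z] be the F_2-algebra homomorphism with π(a) = x, π(b) = y, π(c) = z and π(d) = π(e) = π(f) = 0. Then π maps the invariant ring S[W'^*]^G surjectively onto the full invariant ring F_2[x,y,z]^{GL_3(F_2)} of the action of GL_3(F_2) on F_2[x,y,z] by linear substitution of the variables (the Dickson algebra, a polynomial ring on generators of degrees 4, 6, 7): every GL_3(F_2)-invariant polynomial in F_2[x,y,z] is the image under π of some element of S[W'^*]^G. -/

import Mathlib

set_option synthInstance.maxHeartbeats 1000000
set_option maxHeartbeats 1000000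

open MvPolynomial

/-- The field with two elements. -/
abbrev F2 := ZMod 2

/-- `G = GL₃(𝔽₂)`. -/
abbrev G3 := GL (Fin 3) F2

/-- The generator `A` of `G`. -/
def Agen : G3 := ⟨!![1,0,1; 0,1,0; 0,0,1], !![1,0,1; 0,1,0; 0,0,1], by decide, by decide⟩

/-- The generator `B` of `G`. -/
def Bgen : G3 := ⟨!![0,0,1; 1,0,0; 0,1,0], !![0,1,0; 0,0,1; 1,0,0], by decide, by decide⟩

/-- The matrix `D(A)` of the action on `W'^* = 𝔽₂⁶`. -/
def DA6 : Matrix (Fin 6) (Fin 6) F2 :=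
  !![1,0,1,0,0,1; 0,1,0,0,0,0; 0,0,1,0,0,0; 0,0,0,1,1,0; 0,0,0,0,1,0; 0,0,0,0,0,1]

/-- The matrix `D(B)` of the action on `W'^* = 𝔽₂⁶`. -/
def DB6 : Matrix (Fin 6) (Fin 6) F2 :=
  !![0,0,1,0,0,0; 1,0,0,0,0,0; 0,1,0,0,0,0; 0,0,0,0,0,1; 0,0,0,1,0,0; 0,0,0,0,1,0]

/-- The algebra endomorphism of `S[W'^*] = 𝔽₂[a,b,c,d,e,f]` induced by the right action of
`σ` on the linear forms (coefficient row vectors are multiplied on the right by `D σ`; in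
particular the variable `Xᵢ` is sent to the linear form given by the `i`-th row of `D σ`). -/
noncomputable def polyAct (D : G3 →* GL (Fin 6) F2) (σ : G3) :
    MvPolynomial (Fin 6) F2 →ₐ[F2] MvPolynomial (Fin 6) F2 :=
  aeval (fun i => ∑ j, (D σ : Matrix (Fin 6) (Fin 6) F2) i j • X j)

/-- The invariant ring `S[W'^*]^H` for a subgroup `H ≤ G`. -/
noncomputable def invH (D : G3 →* GL (Fin 6) F2) (H : Subgroup G3) :
    Subalgebra F2 (MvPolynomial (Fin 6) F2) where
  carrier := {p | ∀ σ ∈ H, polyAct D σ p = p}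
  mul_mem' := fun ha hb σ hσ => by rw [map_mul, ha σ hσ, hb σ hσ]
  add_mem' := fun ha hb σ hσ => by rw [map_add, ha σ hσ, hb σ hσ]
  one_mem' := fun σ _ => map_one _
  zero_mem' := fun σ _ => map_zero _
  algebraMap_mem' := fun r σ _ => AlgHom.commutes _ r

/-- The invariant ring `S[W'^*]^G`. -/
noncomputable def invG (D : G3 →* GL (Fin 6) F2) :
    Subalgebra F2 (MvPolynomial (Fin 6) F2) :=
  invH D ⊤

/-- The `𝔽₂`-algebra homomorphism `π : 𝔽₂[a,b,c,d,e,f] → 𝔽₂[x,y,z]` with `π(a) = x`,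
`π(b) = y`, `π(c) = z` and `π(d) = π(e) = π(f) = 0`. -/
noncomputable def piMap : MvPolynomial (Fin 6) F2 →ₐ[F2] MvPolynomial (Fin 3) F2 :=
  aeval ![X 0, X 1, X 2, 0, 0, 0]

/-!
For `v = (α, β, γ)` in `𝔽₂³` put `s v = (α, β, γ, αβ, βγ, αγ)`. This quadratic map satisfies
`s (v σ) = s v · D(σ)`, so the coefficients of `∏ᵥ (T - s v)` in `S[W'^*][T]` are `G`-invariant,
and `π` maps them to the coefficients of `∏ᵥ (T - v)`, the product over all linear forms in
`x, y, z`. By Dickson's theorem the latter coefficients generate `𝔽₂[x, y, z]^{GL₃(𝔽₂)}`.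

Dickson's theorem holds for every finite field `F` with `q` elements and every number `n` of
variables. By induction on `n` only the coefficients of `T ^ q ^ i` in the product over all linear
forms are nonzero, so the coefficients generate an algebra `A` with `n` generators. The
polynomial ring is integral over `A`; hence the generators are algebraically independent and `A`
is integrally closed. The fraction field of the polynomial ring is a splitting field of the
product over that of `A`, and its Galois group permutes the linear forms linearly. So a
`GLₙ(F)`-invariant polynomial lies in the fraction field of `A` and is integral over `A`.
-/

open scoped Polynomial

section LinearSubstitution

variable {R ι κ μ : Type*} [CommSemiring R] [Fintype κ] [Fintype μ]

/-- The substitution sending the variable `Xᵢ` to the linear form given by the `i`-th row of `M`.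
The matrix may be rectangular, so that projections between polynomial rings are covered too. -/
noncomputable def linearSubst (M : Matrix ι κ R) : MvPolynomial ι R →ₐ[R] MvPolynomial κ R :=
  aeval fun i => ∑ j, M i j • X j

theorem linearSubst_one [DecidableEq κ] (p : MvPolynomial κ R) :
    linearSubst (1 : Matrix κ κ R) p = p := by
  simp [linearSubst, Matrix.one_apply]

theorem linearSubst_linearSubst (M : Matrix ι κ R) (N : Matrix κ μ R) (p : MvPolynomial ι R) :
    linearSubst N (linearSubst M p) = linearSubst (M * N) p := by
  suffices (linearSubst N).comp (linearSubst M) = linearSubst (M * N) from DFunLike.congr_fun this p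
  refine algHom_ext fun i => ?_
  simp only [linearSubst, AlgHom.comp_apply, aeval_X, map_sum, map_smul, Matrix.mul_apply,
    Finset.sum_smul, Finset.smul_sum, smul_smul]
  exact Finset.sum_comm

open scoped Matrix in
theorem linearSubst_linearCombination [Fintype ι] (M : Matrix ι κ R) (v : ι → R) :
    linearSubst M (Fintype.linearCombination R X v) =
      Fintype.linearCombination R X (v ᵥ* M) := by
  simp only [linearSubst, Fintype.linearCombination_apply, map_sum, map_smul, aeval_X,
    Finset.smul_sum, smul_smul, Matrix.vecMul, dotProduct, Finset.sum_smul]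
  exact Finset.sum_comm

theorem linearSubst_eq_of_closure_eq_top [DecidableEq κ] {R : Type*} [CommRing R] {Γ : Type*}
    [Group Γ] (ρ : Γ →* GL κ R) {s : Set Γ} (hs : Subgroup.closure s = ⊤) {p : MvPolynomial κ R}
    (hp : ∀ σ ∈ s, linearSubst (ρ σ : Matrix κ κ R) p = p) (σ : Γ) :
    linearSubst (ρ σ : Matrix κ κ R) p = p := by
  have hσ : σ ∈ Subgroup.closure s := hs ▸ Subgroup.mem_top σ
  induction hσ using Subgroup.closure_induction with
  | mem σ hσ => exact hp σ hσ
  | one => rw [map_one, Units.val_one, linearSubst_one]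
  | mul σ τ _ _ hσ hτ => rw [map_mul, Units.val_mul, ← linearSubst_linearSubst, hσ, hτ]
  | inv σ _ hσ =>
    nth_rw 1 [← hσ]
    rw [linearSubst_linearSubst, ← Units.val_mul, ← map_mul, mul_inv_cancel, map_one,
      Units.val_one, linearSubst_one]

end LinearSubstitution

section LinearizedPolynomials

/-- The `q`-linearized polynomials: the `R`-linear combinations of the monomials `T ^ q ^ i`. -/
noncomputable def linearizedPolynomials (q : ℕ) (R : Type*) [Semiring R] : Submodule R R[X] :=
  Submodule.span R (Set.range fun i : ℕ => Polynomial.X ^ q ^ i)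

theorem coeff_eq_zero_of_mem_linearizedPolynomials {q : ℕ} {R : Type*} [Semiring R] {p : R[X]}
    (hp : p ∈ linearizedPolynomials q R) {k : ℕ} (hk : ∀ i, k ≠ q ^ i) : p.coeff k = 0 := by
  induction hp using Submodule.span_induction with
  | mem p hp =>
    obtain ⟨i, rfl⟩ := hp
    simp [Polynomial.coeff_X_pow, hk i]
  | zero => simp
  | add p r _ _ hp hr => simp [hp, hr]
  | smul c p _ hp => simp [hp]

variable {F R : Type*} [Field F] [Fintype F] [CommRing R] {p : R[X]}

theorem aeval_sub_smul_of_mem_linearizedPolynomials {S : Type*} [CommRing S] [Algebra F S]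
    [Algebra R S] (hp : p ∈ linearizedPolynomials (Fintype.card F) R) (c : F) (s t : S) :
    Polynomial.aeval (s - c • t) p = Polynomial.aeval s p - c • Polynomial.aeval t p := by
  induction hp using Submodule.span_induction with
  | mem p hp =>
    obtain ⟨i, rfl⟩ := hp
    have frobenius_iterate (u : S) :
        (FiniteField.frobeniusAlgHom F S ^ i) u = u ^ Fintype.card F ^ i := by
      rw [AlgHom.coe_pow, FiniteField.coe_frobeniusAlgHom, pow_iterate]
    simp only [map_pow, Polynomial.aeval_X, ← frobenius_iterate, map_sub, map_smul]
  | zero => simp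
  | add p r _ _ hp hr => simp only [map_add, hp, hr, smul_add]; ring
  | smul a p _ hp =>
    simp only [map_smul, hp, smul_sub]
    simp only [Algebra.smul_def]
    ring

variable [Algebra F R]

theorem pow_card_mem_linearizedPolynomials (hp : p ∈ linearizedPolynomials (Fintype.card F) R) :
    p ^ Fintype.card F ∈ linearizedPolynomials (Fintype.card F) R := by
  induction hp using Submodule.span_induction with
  | mem p hp =>
    obtain ⟨i, rfl⟩ := hp
    exact Submodule.subset_span ⟨i + 1, by simp only [pow_succ, pow_mul]⟩
  | zero => simp [zero_pow Fintype.card_ne_zero]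
  | add p r _ _ hp hr =>
    rw [show (p + r) ^ Fintype.card F = p ^ Fintype.card F + r ^ Fintype.card F from
      map_add (FiniteField.frobeniusAlgHom F R[X]) p r]
    exact add_mem hp hr
  | smul a p _ hp => rw [smul_pow]; exact Submodule.smul_mem _ _ hp

theorem prod_sub_algebraMap (s : R) :
    ∏ c : F, (s - algebraMap F R c) = s ^ Fintype.card F - s := by
  have monic : (Polynomial.X ^ Fintype.card F - Polynomial.X : F[X]).Monic :=
    Polynomial.monic_X_pow_sub (by simpa using Fintype.one_lt_card)
  have roots_card : (Polynomial.X ^ Fintype.card F - Polynomial.X : F[X]).roots.card =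
      (Polynomial.X ^ Fintype.card F - Polynomial.X : F[X]).natDegree := by
    rw [FiniteField.roots_X_pow_card_sub_X,
      FiniteField.X_pow_card_sub_X_natDegree_eq F Fintype.one_lt_card, Finset.card_val,
      Finset.card_univ]
  have prod_eq := Polynomial.prod_multiset_X_sub_C_of_monic_of_roots_card_eq monic roots_card
  simpa [FiniteField.roots_X_pow_card_sub_X, map_multiset_prod] using
    congrArg (Polynomial.aeval s) prod_eq

theorem prod_sub_smul [IsDomain R] (s t : R) :
    ∏ c : F, (s - c • t) = s ^ Fintype.card F - t ^ (Fintype.card F - 1) * s := by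
  rcases eq_or_ne t 0 with rfl | ht
  · simp [zero_pow (Nat.sub_ne_zero_of_lt (Fintype.one_lt_card (α := F)))]
  apply IsFractionRing.injective R (FractionRing R)
  set s' := algebraMap R (FractionRing R) s
  set t' := algebraMap R (FractionRing R) t
  have ht' : t' ≠ 0 := by simpa [t'] using ht
  calc algebraMap R (FractionRing R) (∏ c : F, (s - c • t))
      = ∏ c : F, t' * (s' / t' - algebraMap F (FractionRing R) c) := by
        rw [map_prod]
        refine Finset.prod_congr rfl fun c _ => ?_
        rw [mul_sub, mul_div_cancel₀ _ ht', map_sub, Algebra.smul_def, map_mul, mul_comm,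
          ← IsScalarTower.algebraMap_apply]
    _ = t' ^ Fintype.card F * ((s' / t') ^ Fintype.card F - s' / t') := by
        rw [Finset.prod_mul_distrib, Finset.prod_const, Finset.card_univ, prod_sub_algebraMap]
    _ = s' ^ Fintype.card F - t' ^ (Fintype.card F - 1) * s' := by
        rw [mul_sub, ← mul_pow, mul_div_cancel₀ _ ht', ← mul_pow_sub_one Fintype.card_ne_zero t']
        field_simp
    _ = algebraMap R (FractionRing R) (s ^ Fintype.card F - t ^ (Fintype.card F - 1) * s) := by
        simp [s', t']

theorem prod_comp_mem_linearizedPolynomials [IsDomain R]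
    (hp : p ∈ linearizedPolynomials (Fintype.card F) R) (y : R) :
    ∏ c : F, p.comp (Polynomial.X - Polynomial.C (c • y)) ∈
      linearizedPolynomials (Fintype.card F) R := by
  have comp_eq (c : F) : p.comp (Polynomial.X - Polynomial.C (c • y)) =
      p - c • Polynomial.C (p.eval y) := by
    have aeval_sub := aeval_sub_smul_of_mem_linearizedPolynomials hp c Polynomial.X (Polynomial.C y)
    rwa [Polynomial.aeval_X_left_apply, ← Polynomial.algebraMap_eq,
      Polynomial.aeval_algebraMap_apply, Polynomial.coe_aeval_eq_eval,
      Polynomial.algebraMap_eq, Polynomial.smul_C, ← Polynomial.comp_eq_aeval] at aeval_sub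
  simp only [comp_eq]
  rw [prod_sub_smul, ← Polynomial.C_pow, ← Polynomial.smul_eq_C_mul]
  exact sub_mem (pow_card_mem_linearizedPolynomials hp) (Submodule.smul_mem _ _ hp)

end LinearizedPolynomials

section SpanPolynomial

variable (F : Type*) {R S ι : Type*} [Field F] [Fintype F] [CommRing R] [Algebra F R] [Fintype ι]
  [DecidableEq ι]

/-- The monic polynomial whose roots are the `F`-linear combinations of the family `x`, where
coinciding linear combinations of a dependent family count as multiple roots. For the variables
of a polynomial ring this is the Dickson polynomial. -/
noncomputable def spanPolynomial (x : ι → R) : R[X] :=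
  ∏ v : ι → F, (Polynomial.X - Polynomial.C (Fintype.linearCombination F x v))

theorem monic_spanPolynomial (x : ι → R) : (spanPolynomial F x).Monic :=
  Polynomial.monic_prod_X_sub_C _ _

theorem natDegree_spanPolynomial [Nontrivial R] (x : ι → R) :
    (spanPolynomial F x).natDegree = Fintype.card F ^ Fintype.card ι := by
  rw [spanPolynomial, Polynomial.natDegree_finsetProd_X_sub_C_eq_card, Finset.card_univ,
    Fintype.card_fun]

theorem splits_spanPolynomial (x : ι → R) : (spanPolynomial F x).Splits :=
  Polynomial.Splits.prod fun _ _ => Polynomial.Splits.X_sub_C _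

theorem map_spanPolynomial [CommRing S] [Algebra F S] (φ : R →ₐ[F] S) (x : ι → R) :
    (spanPolynomial F x).map φ.toRingHom = spanPolynomial F (φ ∘ x) := by
  simp only [spanPolynomial, Polynomial.map_prod, Polynomial.map_sub, Polynomial.map_X,
    Polynomial.map_C]
  simp [Fintype.linearCombination_apply]

variable {F}

theorem eval_spanPolynomial_apply (x : ι → R) (i : ι) : (spanPolynomial F x).eval (x i) = 0 := by
  rw [spanPolynomial, Polynomial.eval_prod]
  exact Finset.prod_eq_zero (Finset.mem_univ (Pi.single i 1)) (by simp)

theorem eval_spanPolynomial_eq_zero_iff [IsDomain R] {x : ι → R} {y : R} :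
    (spanPolynomial F x).eval y = 0 ↔ ∃ v : ι → F, y = Fintype.linearCombination F x v := by
  simp [spanPolynomial, Polynomial.eval_prod, Finset.prod_eq_zero_iff, sub_eq_zero]

theorem separable_spanPolynomial {L : Type*} [Field L] [Algebra F L] {x : ι → L}
    (hx : LinearIndependent F x) : (spanPolynomial F x).Separable :=
  Polynomial.separable_prod_X_sub_C_iff.2 hx.fintypeLinearCombination_injective

theorem spanPolynomial_succ {n : ℕ} (x : Fin (n + 1) → R) :
    spanPolynomial F x =
      ∏ c : F, (spanPolynomial F (Fin.tail x)).comp (Polynomial.X - Polynomial.C (c • x 0)) := by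
  simp only [spanPolynomial]
  rw [← (Fin.consEquiv fun _ => F).prod_comp, Fintype.prod_prod_type]
  simp [Polynomial.prod_comp, Fintype.linearCombination_apply, Fin.sum_univ_succ, Fin.tail, sub_sub]

variable [IsDomain R] {n : ℕ}

theorem spanPolynomial_mem_linearizedPolynomials (x : Fin n → R) :
    spanPolynomial F x ∈ linearizedPolynomials (Fintype.card F) R := by
  induction n with
  | zero =>
    exact Submodule.subset_span ⟨0, by simp [spanPolynomial, Fintype.linearCombination_apply]⟩
  | succ n ih =>
    rw [spanPolynomial_succ]
    exact prod_comp_mem_linearizedPolynomials (ih (Fin.tail x)) (x 0)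

theorem coeff_spanPolynomial_mem_adjoin (x : Fin n → R) (k : ℕ) :
    (spanPolynomial F x).coeff k ∈ Algebra.adjoin F (Set.range fun i : Fin n =>
      (spanPolynomial F x).coeff (Fintype.card F ^ (i : ℕ))) := by
  by_cases hk : ∃ i, k = Fintype.card F ^ i
  · obtain ⟨i, rfl⟩ := hk
    have natDegree_eq : (spanPolynomial F x).natDegree = Fintype.card F ^ n := by
      rw [natDegree_spanPolynomial, Fintype.card_fin]
    rcases lt_trichotomy i n with hi | rfl | hi
    · exact Algebra.subset_adjoin ⟨⟨i, hi⟩, rfl⟩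
    · rw [← natDegree_eq, (monic_spanPolynomial F x).coeff_natDegree]
      exact one_mem _
    · rw [Polynomial.coeff_eq_zero_of_natDegree_lt
        (natDegree_eq ▸ Nat.pow_lt_pow_right Fintype.one_lt_card hi)]
      exact zero_mem _
  · push Not at hk
    rw [coeff_eq_zero_of_mem_linearizedPolynomials (spanPolynomial_mem_linearizedPolynomials x) hk]
    exact zero_mem _

end SpanPolynomial

section SplittingField

variable {F K L ι : Type*} [Field F] [Fintype F] [Field K] [Field L] [Algebra F L] [Algebra K L]
  [Fintype ι] [DecidableEq ι] {x : ι → L} {p : K[X]}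

theorem isSplittingField_of_map_eq_spanPolynomial
    (hp : p.map (algebraMap K L) = spanPolynomial F x)
    (htop : IntermediateField.adjoin K (Set.range x) = ⊤) : p.IsSplittingField K L := by
  rw [isSplittingField_iff_intermediateField, hp]
  refine ⟨splits_spanPolynomial F x, top_unique (htop ▸ ?_)⟩
  refine IntermediateField.adjoin.mono _ _ _ (Set.range_subset_iff.2 fun i => ?_)
  rw [Polynomial.mem_rootSet', hp, Polynomial.aeval_def, ← Polynomial.eval_map, hp]
  exact ⟨(monic_spanPolynomial F x).ne_zero, eval_spanPolynomial_apply x i⟩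

theorem exists_GL_map_eq_sum [Algebra F K] [IsScalarTower F K L] (hx : LinearIndependent F x)
    (hp : p.map (algebraMap K L) = spanPolynomial F x) (σ : Gal(L/K)) :
    ∃ g : GL ι F, ∀ i, σ (x i) = ∑ j, (g : Matrix ι ι F) i j • x j := by
  have eval_eq (y : L) : (spanPolynomial F x).eval y = Polynomial.aeval y p := by
    rw [← hp, Polynomial.eval_map_algebraMap]
  have exists_row (i : ι) : ∃ v : ι → F, σ (x i) = Fintype.linearCombination F x v := by
    rw [← eval_spanPolynomial_eq_zero_iff, eval_eq, Polynomial.aeval_algHom_apply σ,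
      ← eval_eq, eval_spanPolynomial_apply, map_zero]
  choose M hM using exists_row
  have rows_linearIndependent : LinearIndependent F M := by
    refine LinearIndependent.of_comp (Fintype.linearCombination F x) ?_
    have image_eq : Fintype.linearCombination F x ∘ M = (σ.restrictScalars F).toLinearMap ∘ x :=
      funext fun i => (hM i).symm
    rw [image_eq]
    exact hx.map' _ (LinearMap.ker_eq_bot.2 σ.injective)
  exact ⟨(Matrix.linearIndependent_rows_iff_isUnit.1 rows_linearIndependent).unit, hM⟩

end SplittingField

section FractionField

variable (ι F K L : Type*) [Field F] [Field K] [Field L] [Algebra F L]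
  [Algebra (MvPolynomial ι F) L] [IsScalarTower F (MvPolynomial ι F) L]

theorem linearIndependent_algebraMap_X [FaithfulSMul (MvPolynomial ι F) L] :
    LinearIndependent F fun i : ι => algebraMap (MvPolynomial ι F) L (X i) :=
  (linearIndependent_X ι F).map' (IsScalarTower.toAlgHom F (MvPolynomial ι F) L).toLinearMap
    (LinearMap.ker_eq_bot.2 (FaithfulSMul.algebraMap_injective _ L))

variable [Algebra F K] [Algebra K L] [IsScalarTower F K L]

theorem adjoin_range_algebraMap_X_eq_top [IsFractionRing (MvPolynomial ι F) L] :
    IntermediateField.adjoin K (Set.range fun i : ι => algebraMap (MvPolynomial ι F) L (X i)) =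
      ⊤ := by
  set E := IntermediateField.adjoin K (Set.range fun i : ι => algebraMap (MvPolynomial ι F) L (X i))
  have algebraMap_mem (q : MvPolynomial ι F) : algebraMap (MvPolynomial ι F) L q ∈ E := by
    induction q using MvPolynomial.induction_on with
    | C c =>
      rw [← MvPolynomial.algebraMap_eq, ← IsScalarTower.algebraMap_apply,
        IsScalarTower.algebraMap_apply F K L]
      exact E.algebraMap_mem _
    | add q r hq hr => exact map_add (algebraMap _ L) q r ▸ add_mem hq hr
    | mul_X q i hq =>
      exact map_mul (algebraMap _ L) q _ ▸
        mul_mem hq (IntermediateField.subset_adjoin K _ ⟨i, rfl⟩)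
  refine top_unique fun y _ => ?_
  obtain ⟨a, b, -, rfl⟩ := IsFractionRing.div_surjective (A := MvPolynomial ι F) y
  exact div_mem (algebraMap_mem a) (algebraMap_mem b)

variable {ι F K L} [Fintype F] [Fintype ι] [DecidableEq ι] {p : K[X]} {q : MvPolynomial ι F}

theorem map_algebraMap_eq_of_linearSubst_eq [FaithfulSMul (MvPolynomial ι F) L]
    (hp : p.map (algebraMap K L) = spanPolynomial F fun i => algebraMap (MvPolynomial ι F) L (X i))
    (hq : ∀ g : GL ι F, linearSubst (g : Matrix ι ι F) q = q) (σ : Gal(L/K)) :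
    σ (algebraMap _ L q) = algebraMap _ L q := by
  let ψ := IsScalarTower.toAlgHom F (MvPolynomial ι F) L
  obtain ⟨g, hg⟩ := exists_GL_map_eq_sum (linearIndependent_algebraMap_X ι F L) hp σ
  have comp_eq : (σ.restrictScalars F).toAlgHom.comp ψ =
      ψ.comp (linearSubst (g : Matrix ι ι F)) := by
    refine algHom_ext fun i => ?_
    rw [AlgHom.comp_apply, AlgHom.comp_apply, linearSubst, aeval_X, map_sum]
    simp only [map_smul]
    exact hg i
  exact (DFunLike.congr_fun comp_eq q).trans (congrArg ψ (hq g))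

theorem algebraMap_mem_range_of_linearSubst_eq [IsFractionRing (MvPolynomial ι F) L]
    (hp : p.map (algebraMap K L) = spanPolynomial F fun i => algebraMap (MvPolynomial ι F) L (X i))
    (hq : ∀ g : GL ι F, linearSubst (g : Matrix ι ι F) q = q) :
    algebraMap _ L q ∈ Set.range (algebraMap K L) := by
  have : FaithfulSMul (MvPolynomial ι F) L :=
    (faithfulSMul_iff_algebraMap_injective _ _).2 (IsFractionRing.injective _ L)
  have : p.IsSplittingField K L :=
    isSplittingField_of_map_eq_spanPolynomial hp (adjoin_range_algebraMap_X_eq_top ι F K L)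
  have separable : p.Separable := by
    rw [← Polynomial.separable_map (algebraMap K L), hp]
    exact separable_spanPolynomial (linearIndependent_algebraMap_X ι F L)
  have : IsGalois K L := .of_separable_splitting_field separable
  have : FiniteDimensional K L := Polynomial.IsSplittingField.finiteDimensional L p
  exact (IsGalois.mem_range_algebraMap_iff_fixed _).2 (map_algebraMap_eq_of_linearSubst_eq hp hq)

end FractionField

section IntegralExtension

variable {F ι A : Type*} [Field F] [Fintype F] [Fintype ι] [DecidableEq ι] [CommRing A]
  [Algebra A (MvPolynomial ι F)] [FaithfulSMul A (MvPolynomial ι F)]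

theorem exists_monic_map_eq_spanPolynomial
    (hA : ∀ k, (spanPolynomial F X).coeff k ∈ Set.range (algebraMap A (MvPolynomial ι F))) :
    ∃ p : A[X], p.Monic ∧ p.map (algebraMap A (MvPolynomial ι F)) = spanPolynomial F X := by
  obtain ⟨p, hp : p.map _ = _⟩ := (Polynomial.lifts_iff_coeff_lifts _).2 hA
  refine ⟨p, Polynomial.monic_of_injective
    (FaithfulSMul.algebraMap_injective A (MvPolynomial ι F)) ?_, hp⟩
  exact hp ▸ monic_spanPolynomial F X

variable [Algebra F A] [IsScalarTower F A (MvPolynomial ι F)]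

theorem isIntegral_of_coeff_spanPolynomial_mem
    (hA : ∀ k, (spanPolynomial F X).coeff k ∈ Set.range (algebraMap A (MvPolynomial ι F))) :
    Algebra.IsIntegral A (MvPolynomial ι F) := by
  obtain ⟨p, monic, hp⟩ := exists_monic_map_eq_spanPolynomial hA
  refine ⟨fun q => ?_⟩
  induction q using MvPolynomial.induction_on with
  | C c =>
    rw [← MvPolynomial.algebraMap_eq, IsScalarTower.algebraMap_apply F A]
    exact isIntegral_algebraMap
  | add q r hq hr => exact hq.add hr
  | mul_X q i hq =>
    refine hq.mul ⟨p, monic, ?_⟩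
    rw [← Polynomial.eval_map, hp, eval_spanPolynomial_apply]

theorem mem_range_algebraMap_of_linearSubst_eq [IsIntegrallyClosed A]
    (hA : ∀ k, (spanPolynomial F X).coeff k ∈ Set.range (algebraMap A (MvPolynomial ι F)))
    {q : MvPolynomial ι F} (hq : ∀ g : GL ι F, linearSubst (g : Matrix ι ι F) q = q) :
    q ∈ Set.range (algebraMap A (MvPolynomial ι F)) := by
  have : IsDomain A := .of_faithfulSMul A (MvPolynomial ι F)
  let K := FractionRing A
  let L := FractionRing (MvPolynomial ι F)
  let _ : Algebra K L := FractionRing.liftAlgebra A L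
  have : IsScalarTower A K L := FractionRing.isScalarTower_liftAlgebra A L
  have : IsScalarTower F K L := .to₁₃₄ F A K L
  obtain ⟨y, hy⟩ : algebraMap _ L q ∈ Set.range (algebraMap K L) := by
    obtain ⟨p, -, hp⟩ := exists_monic_map_eq_spanPolynomial hA
    refine algebraMap_mem_range_of_linearSubst_eq (p := p.map (algebraMap A K)) ?_ hq
    rw [Polynomial.map_map, ← IsScalarTower.algebraMap_eq,
      IsScalarTower.algebraMap_eq A (MvPolynomial ι F) L, ← Polynomial.map_map, hp]
    exact map_spanPolynomial F (IsScalarTower.toAlgHom F (MvPolynomial ι F) L) X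
  have isIntegral_y : IsIntegral A y := by
    have := isIntegral_of_coeff_spanPolynomial_mem hA
    rw [← isIntegral_algebraMap_iff (algebraMap K L).injective, hy]
    exact (Algebra.IsIntegral.isIntegral q).algebraMap
  obtain ⟨r, rfl⟩ := IsIntegrallyClosed.isIntegral_iff.1 isIntegral_y
  rw [← IsScalarTower.algebraMap_apply, IsScalarTower.algebraMap_apply A (MvPolynomial ι F) L] at hy
  exact ⟨r, IsFractionRing.injective _ L hy⟩

end IntegralExtension

section Dickson

variable (F : Type*) [Field F] [Fintype F] (n : ℕ)

/-- The Dickson invariant of degree `q ^ n - q ^ i`, where `q` is the cardinality of `F`: the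
coefficient of `T ^ q ^ i` in the product of `T - ℓ` over all linear forms `ℓ`. -/
noncomputable def dicksonInvariant (i : Fin n) : MvPolynomial (Fin n) F :=
  (spanPolynomial F X).coeff (Fintype.card F ^ (i : ℕ))

theorem coeff_spanPolynomial_X_mem_range_algebraMap (k : ℕ) :
    (spanPolynomial F X).coeff k ∈ Set.range
      (algebraMap (Algebra.adjoin F (Set.range (dicksonInvariant F n))) (MvPolynomial (Fin n) F)) :=
  ⟨⟨_, coeff_spanPolynomial_mem_adjoin X k⟩, rfl⟩

theorem algebraicIndependent_dicksonInvariant :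
    AlgebraicIndependent F (dicksonInvariant F n) := by
  have := isIntegral_of_coeff_spanPolynomial_mem (coeff_spanPolynomial_X_mem_range_algebraMap F n)
  refine (Algebra.IsAlgebraic.isTranscendenceBasis_of_lift_le_trdeg_of_finite F _ ?_).1
  simp

variable {F n}

theorem mem_adjoin_dicksonInvariant_of_linearSubst_eq {q : MvPolynomial (Fin n) F}
    (hq : ∀ g : GL (Fin n) F, linearSubst (g : Matrix (Fin n) (Fin n) F) q = q) :
    q ∈ Algebra.adjoin F (Set.range (dicksonInvariant F n)) := by
  have : IsIntegrallyClosed (Algebra.adjoin F (Set.range (dicksonInvariant F n))) :=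
    .of_equiv (algebraicIndependent_dicksonInvariant F n).aevalEquiv.toRingEquiv
  obtain ⟨r, rfl⟩ := mem_range_algebraMap_of_linearSubst_eq
    (coeff_spanPolynomial_X_mem_range_algebraMap F n) hq
  exact r.2

end Dickson

section Generation

theorem eq_top_of_forall_transvection_mem {n : Type*} [Fintype n] [DecidableEq n]
    (H : Subgroup (GL n F2))
    (hH : ∀ i j, i ≠ j → ∃ g ∈ H, (g : Matrix n n F2) = Matrix.transvection i j 1) : H = ⊤ := by
  refine eq_top_iff.2 fun σ _ => ?_
  suffices (σ : Matrix n n F2) ∈ H.toSubmonoid.map (Units.coeHom (Matrix n n F2)) by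
    obtain ⟨g, hg, hgσ⟩ := this
    exact Units.ext hgσ ▸ hg
  have det_ne_zero : (σ : Matrix n n F2).det ≠ 0 :=
    ((Matrix.isUnit_iff_isUnit_det _).1 σ.isUnit).ne_zero
  have eq_one_of_ne_zero : ∀ c : F2, c ≠ 0 → c = 1 := by decide
  refine Matrix.diagonal_transvection_induction (· ∈ H.toSubmonoid.map (Units.coeHom _))
    _ (fun d hd => ?_) (fun t => ?_) (fun _ _ => mul_mem)
  · rw [Matrix.det_diagonal] at hd
    have d_eq_one : d = 1 := funext fun i =>
      eq_one_of_ne_zero _ (Finset.prod_ne_zero_iff.1 (hd ▸ det_ne_zero) i (Finset.mem_univ i))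
    rw [d_eq_one]
    exact ⟨1, one_mem H, Matrix.diagonal_one.symm⟩
  · obtain ⟨i, j, hij, c⟩ := t
    rw [Matrix.TransvectionStruct.toMatrix_mk]
    rcases eq_or_ne c 0 with rfl | hc
    · exact ⟨1, one_mem H, (Matrix.transvection_zero i j).symm⟩
    · obtain ⟨g, hg, hg_eq⟩ := hH i j hij
      exact ⟨g, hg, (eq_one_of_ne_zero c hc).symm ▸ hg_eq⟩

theorem closure_Agen_Bgen_eq_top : Subgroup.closure {Agen, Bgen} = ⊤ := by
  set H := Subgroup.closure {Agen, Bgen}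
  have Agen_mem : Agen ∈ H := Subgroup.subset_closure (by simp)
  have Bgen_mem : Bgen ∈ H := Subgroup.subset_closure (by simp)
  let conj (k : Fin 3) : G3 := Bgen ^ (k : ℕ) * Agen * (Bgen ^ (k : ℕ))⁻¹
  have conj_mem (k : Fin 3) : conj k ∈ H :=
    mul_mem (mul_mem (pow_mem Bgen_mem _) Agen_mem) (inv_mem (pow_mem Bgen_mem _))
  -- Conjugation by `B` permutes the indices cyclically, so the `conj k` are three of the six
  -- transvections; their commutators are the other three.
  have transvection_eq : ∀ i j : Fin 3, i ≠ j → ∃ k l,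
      (conj k : Matrix (Fin 3) (Fin 3) F2) = Matrix.transvection i j 1 ∨
      ((conj k * conj l * (conj k)⁻¹ * (conj l)⁻¹ : G3) : Matrix (Fin 3) (Fin 3) F2) =
        Matrix.transvection i j 1 := by
    decide
  refine eq_top_of_forall_transvection_mem H fun i j hij => ?_
  obtain ⟨k, l, h | h⟩ := transvection_eq i j hij
  · exact ⟨_, conj_mem k, h⟩
  · exact ⟨_, mul_mem (mul_mem (mul_mem (conj_mem k) (conj_mem l)) (inv_mem (conj_mem k)))
      (inv_mem (conj_mem l)), h⟩

end Generation

section Projection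

/-- The matrix of `π` on linear forms. -/
def projMatrix : Matrix (Fin 6) (Fin 3) F2 :=
  !![1,0,0; 0,1,0; 0,0,1; 0,0,0; 0,0,0; 0,0,0]

theorem piMap_eq_linearSubst : piMap = linearSubst projMatrix := by
  refine algHom_ext fun i => ?_
  fin_cases i <;> simp [piMap, linearSubst, projMatrix, Fin.sum_univ_three]

theorem mem_invG_iff {D : G3 →* GL (Fin 6) F2}
    (hA : (D Agen : Matrix (Fin 6) (Fin 6) F2) = DA6)
    (hB : (D Bgen : Matrix (Fin 6) (Fin 6) F2) = DB6) {p : MvPolynomial (Fin 6) F2} :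
    p ∈ invG D ↔ linearSubst DA6 p = p ∧ linearSubst DB6 p = p := by
  rw [← hA, ← hB]
  refine ⟨fun hp => ⟨hp Agen trivial, hp Bgen trivial⟩, fun hp σ _ => ?_⟩
  exact linearSubst_eq_of_closure_eq_top D closure_Agen_Bgen_eq_top (by simpa using hp) σ

theorem linearSubst_piMap_of_mem_invG {D : G3 →* GL (Fin 6) F2}
    (hA : (D Agen : Matrix (Fin 6) (Fin 6) F2) = DA6)
    (hB : (D Bgen : Matrix (Fin 6) (Fin 6) F2) = DB6) {p : MvPolynomial (Fin 6) F2}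
    (hp : p ∈ invG D) (σ : G3) :
    linearSubst (σ : Matrix (Fin 3) (Fin 3) F2) (piMap p) = piMap p := by
  have piMap_linearSubst {M : Matrix (Fin 6) (Fin 6) F2} {N : Matrix (Fin 3) (Fin 3) F2}
      (h : projMatrix * N = M * projMatrix) (hM : linearSubst M p = p) :
      linearSubst N (piMap p) = piMap p := by
    rw [piMap_eq_linearSubst, linearSubst_linearSubst, h, ← linearSubst_linearSubst, hM]
  obtain ⟨hpA, hpB⟩ := (mem_invG_iff hA hB).1 hp
  refine linearSubst_eq_of_closure_eq_top (MonoidHom.id G3) closure_Agen_Bgen_eq_top ?_ σ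
  rintro _ (rfl | rfl)
  · exact piMap_linearSubst (by decide) hpA
  · exact piMap_linearSubst (by decide) hpB

end Projection

section Lift

open scoped Matrix

/-- A quadratic section of the projection `𝔽₂⁶ → 𝔽₂³` along which the action of `G` on `𝔽₂³` by
right multiplication lifts to its action on `W'^*`. -/
def quadraticSection (v : Fin 3 → F2) : Fin 6 → F2 :=
  ![v 0, v 1, v 2, v 0 * v 1, v 1 * v 2, v 0 * v 2]

/-- The product of `T - ℓ` over the linear forms `ℓ` with coefficient vector in the image of
`quadraticSection`; it lifts the Dickson polynomial in three variables. -/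
noncomputable def liftedDicksonPolynomial : (MvPolynomial (Fin 6) F2)[X] :=
  ∏ v : Fin 3 → F2, (Polynomial.X - Polynomial.C (Fintype.linearCombination F2 X
    (quadraticSection v)))

theorem map_liftedDicksonPolynomial :
    liftedDicksonPolynomial.map piMap.toRingHom = spanPolynomial F2 X := by
  have quadraticSection_vecMul : ∀ v, quadraticSection v ᵥ* projMatrix = v := by decide
  rw [liftedDicksonPolynomial, spanPolynomial, Polynomial.map_prod]
  refine Finset.prod_congr rfl fun v _ => ?_
  rw [Polynomial.map_sub, Polynomial.map_X, Polynomial.map_C, AlgHom.toRingHom_eq_coe,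
    RingHom.coe_coe, piMap_eq_linearSubst, linearSubst_linearCombination, quadraticSection_vecMul]

theorem linearSubst_coeff_liftedDicksonPolynomial {M : Matrix (Fin 6) (Fin 6) F2} {σ : G3}
    (h : ∀ v, quadraticSection v ᵥ* M = quadraticSection (v ᵥ* (σ : Matrix (Fin 3) (Fin 3) F2)))
    (k : ℕ) :
    linearSubst M (liftedDicksonPolynomial.coeff k) = liftedDicksonPolynomial.coeff k := by
  have vecMul_bijective : Function.Bijective (· ᵥ* (σ : Matrix (Fin 3) (Fin 3) F2)) :=
    Finite.injective_iff_bijective.1 (Matrix.vecMul_injective_of_isUnit σ.isUnit)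
  have map_eq : liftedDicksonPolynomial.map (linearSubst M).toRingHom =
      liftedDicksonPolynomial := by
    rw [liftedDicksonPolynomial, Polynomial.map_prod]
    refine Fintype.prod_bijective _ vecMul_bijective _ _ fun v => ?_
    rw [Polynomial.map_sub, Polynomial.map_X, Polynomial.map_C, AlgHom.toRingHom_eq_coe,
      RingHom.coe_coe, linearSubst_linearCombination, h]
  simpa using congrArg (Polynomial.coeff · k) map_eq

theorem coeff_liftedDicksonPolynomial_mem_invG {D : G3 →* GL (Fin 6) F2}
    (hA : (D Agen : Matrix (Fin 6) (Fin 6) F2) = DA6)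
    (hB : (D Bgen : Matrix (Fin 6) (Fin 6) F2) = DB6) (k : ℕ) :
    liftedDicksonPolynomial.coeff k ∈ invG D :=
  (mem_invG_iff hA hB).2
    ⟨linearSubst_coeff_liftedDicksonPolynomial (σ := Agen) (by decide) k,
      linearSubst_coeff_liftedDicksonPolynomial (σ := Bgen) (by decide) k⟩

theorem adjoin_dicksonInvariant_le_map_piMap {D : G3 →* GL (Fin 6) F2}
    (hA : (D Agen : Matrix (Fin 6) (Fin 6) F2) = DA6)
    (hB : (D Bgen : Matrix (Fin 6) (Fin 6) F2) = DB6) :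
    Algebra.adjoin F2 (Set.range (dicksonInvariant F2 3)) ≤ (invG D).map piMap := by
  refine Algebra.adjoin_le (Set.range_subset_iff.2 fun i => ?_)
  refine ⟨_, coeff_liftedDicksonPolynomial_mem_invG hA hB (Fintype.card F2 ^ (i : ℕ)), ?_⟩
  rw [dicksonInvariant, ← map_liftedDicksonPolynomial, Polynomial.coeff_map]
  rfl

end Lift

theorem exists_GL_eq_transpose {n R : Type*} [Fintype n] [DecidableEq n] [CommRing R]
    (σ : GL n R) : ∃ τ : GL n R, (τ : Matrix n n R) = (σ : Matrix n n R).transpose :=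
  ⟨((Matrix.isUnit_transpose _).2 σ.isUnit).unit, rfl⟩

/-- `π` maps the invariant ring `S[W'^*]^G` surjectively onto the full
invariant ring `𝔽₂[x,y,z]^{GL₃(𝔽₂)}` of the action of `GL₃(𝔽₂)` on `𝔽₂[x,y,z]` by
linear substitution of the variables (the Dickson algebra): every `GL₃(𝔽₂)`-invariant
polynomial in `𝔽₂[x,y,z]` is the image under `π` of some element of `S[W'^*]^G`. -/
theorem stmt19 (D : G3 →* GL (Fin 6) F2)
    (hA : (D Agen : Matrix (Fin 6) (Fin 6) F2) = DA6)
    (hB : (D Bgen : Matrix (Fin 6) (Fin 6) F2) = DB6) :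
    -- `π` maps `S[W'^*]^G` into the Dickson algebra `𝔽₂[x,y,z]^{GL₃(𝔽₂)}` …
    (∀ p ∈ invG D, ∀ σ : G3,
      aeval (fun i => ∑ j, (σ : Matrix (Fin 3) (Fin 3) F2) j i • X j) (piMap p)
        = piMap p) ∧
    -- … and surjectively onto it:
    (∀ q : MvPolynomial (Fin 3) F2,
      (∀ σ : G3,
        aeval (fun i => ∑ j, (σ : Matrix (Fin 3) (Fin 3) F2) j i • X j) q = q) →
      ∃ p ∈ invG D, piMap p = q) := by
  constructor
  · intro p hp σ
    obtain ⟨τ, hτ⟩ := exists_GL_eq_transpose σ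
    have piMap_fixed := linearSubst_piMap_of_mem_invG hA hB hp τ
    rwa [hτ] at piMap_fixed
  · intro q hq
    have q_fixed (τ : G3) : linearSubst (τ : Matrix (Fin 3) (Fin 3) F2) q = q := by
      obtain ⟨σ, hσ⟩ := exists_GL_eq_transpose τ
      rw [← Matrix.transpose_transpose (τ : Matrix (Fin 3) (Fin 3) F2), ← hσ]
      exact hq σ
    exact adjoin_dicksonInvariant_le_map_piMap hA hB
      (mem_adjoin_dicksonInvariant_of_linearSubst_eq q_fixed)
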